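/- Fix natural numbers N and t with t ≤ N. If (α, β) satisfies the t-deletion non-deformation conditions, then for every natural number m with m ≤ t, (α, β) satisfies the m-deletion non-deformation conditions. -/

import Mathlib

open Finset

/-! Since `N - m = (N - t) + (t - m)`, Vandermonde's identity writes the weights `C(N - m, ·)` as
the convolution of `C(N - t, ·)` with `C(t - m, ·)`. The `m`-deletion sum at offsets `(a, b)` is
therefore a combination of the `t`-deletion sums at the offsets `(a + j, b + j)` with `j ≤ t - m`,
and these offsets do not exceed `t`. -/

section BinomialSums

variable {M : Type*} [AddCommMonoid M]

theorem sum_range_choose_nsmul_of_lt {n K : ℕ} (hn : n < K) (G : ℕ → M) :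
    ∑ k ∈ range K, n.choose k • G k = ∑ k ∈ range (n + 1), n.choose k • G k :=
  eventually_constant_sum (fun k hk => by rw [Nat.choose_eq_zero_of_lt hk, zero_nsmul]) hn

theorem sum_range_choose_add_nsmul (n d : ℕ) (G : ℕ → M) :
    ∑ k ∈ range (n + d + 1), (n + d).choose k • G k =
      ∑ j ∈ range (d + 1), d.choose j • ∑ k ∈ range (n + 1), n.choose k • G (k + j) := by
  induction d generalizing G with
  | zero => simp
  | succ d ih =>
    rw [← add_assoc n, sum_choose_succ_nsmul (fun k _ => G k) (n + d), ih, ih,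
      sum_choose_succ_nsmul (fun j _ => ∑ k ∈ range (n + 1), n.choose k • G (k + j)) d]
    simp only [add_assoc]

theorem deletion_monotone_nonDeformation_general {N t : ℕ} (htN : t ≤ N) (F : ℕ → ℕ → M)
    (h : ∀ a b : ℕ, a ≤ t → b ≤ t →
      ∑ k ∈ range (N + 1), (N - t).choose k • F (k + a) (k + b) = 0)
    {m : ℕ} (hm : m ≤ t) {a b : ℕ} (ha : a ≤ m) (hb : b ≤ m) :
    ∑ k ∈ range (N + 1), (N - m).choose k • F (k + a) (k + b) = 0 := by
  have upper_split : N - m = N - t + (t - m) := by omega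
  rw [sum_range_choose_nsmul_of_lt (by omega) fun k => F (k + a) (k + b), upper_split,
    sum_range_choose_add_nsmul]
  refine sum_eq_zero fun j hj => ?_
  have hj_le : j ≤ t - m := mem_range_succ_iff.mp hj
  have shifted_sum :
      ∑ k ∈ range (N + 1), (N - t).choose k • F (k + j + a) (k + j + b) = 0 := by
    simpa only [add_assoc] using h (j + a) (j + b) (by omega) (by omega)
  rw [sum_range_choose_nsmul_of_lt (by omega) fun k => F (k + j + a) (k + j + b)] at shifted_sum
  rw [shifted_sum, nsmul_zero]

end BinomialSums

theorem deletion_monotone_nonDeformation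
    (N t : ℕ) (htN : t ≤ N)
    (α β : ℕ → ℂ) (hα : ∀ k : ℕ, N < k → α k = 0) (hβ : ∀ k : ℕ, N < k → β k = 0)
    (h : ∀ a' b' : ℕ, a' ≤ t → b' ≤ t →
      ∑ k ∈ Finset.range (N + 1), ((N - (t)).choose k : ℂ) / ((Real.sqrt ((N.choose (k + a') * N.choose (k + b') : ℕ)) : ℝ) : ℂ) * ((starRingEnd ℂ) (α (k + a')) * α (k + b') - (starRingEnd ℂ) (β (k + a')) * β (k + b')) = 0) :
    ∀ m : ℕ, m ≤ t →
    ∀ a' b' : ℕ, a' ≤ m → b' ≤ m →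
      ∑ k ∈ Finset.range (N + 1), ((N - (m)).choose k : ℂ) / ((Real.sqrt ((N.choose (k + a') * N.choose (k + b') : ℕ)) : ℝ) : ℂ) * ((starRingEnd ℂ) (α (k + a')) * α (k + b') - (starRingEnd ℂ) (β (k + a')) * β (k + b')) = 0 := by
  intro m hm a b ha hb
  simp only [div_mul_eq_mul_div, ← nsmul_eq_mul, smul_div_assoc] at h ⊢
  exact deletion_monotone_nonDeformation_general htN (fun i j =>
    ((starRingEnd ℂ) (α i) * α j - (starRingEnd ℂ) (β i) * β j) /
      (Real.sqrt ((N.choose i * N.choose j : ℕ)) : ℝ)) h hm ha hb
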